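/- arXiv:1909.00409 — 6 statements merged into one kernel-verified Lean document; each statement's English description precedes it below -/
import Mathlib

section
/- Let α be a set, C ⊆ α, and let φ, ψ : ℝ → α → α be two one-parameter groups of maps (φ 0 = id, φ (s+t) = φ s ∘ φ t, and likewise for ψ). Assume that the two flows agree along trajectories avoiding C, i.e. for every q ∈ α and every s ≥ 0, if ψ u q ∉ C for all u ∈ [0, s], then φ s q = ψ s q. If p ∈ α and τ ≥ 0 are such that ψ u p ∉ C for all u ≥ τ, then for all real t, t' with t' ≥ t > τ one has φ (−t') (ψ t' p) = φ (−t) (ψ t p); that is, the scattering composition φ (−t) ∘ ψ t stabilizes at p after the exit time τ. -/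
/-- Scattering composition `φ (−t) ∘ ψ t` stabilizes at `p` after the exit time `τ`:
two one-parameter groups of maps that agree along trajectories avoiding `C`. -/
theorem scattering_stabilizes {α : Type*} (C : Set α) (φ ψ : ℝ → α → α)
    (hφ0 : ∀ x, φ 0 x = x) (hφadd : ∀ s t x, φ (s + t) x = φ s (φ t x))
    (hψ0 : ∀ x, ψ 0 x = x) (hψadd : ∀ s t x, ψ (s + t) x = ψ s (ψ t x))
    (hagree : ∀ q : α, ∀ s : ℝ, 0 ≤ s →
      (∀ u : ℝ, 0 ≤ u → u ≤ s → ψ u q ∉ C) → φ s q = ψ s q)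
    (p : α) (τ : ℝ) (hτ : 0 ≤ τ) (hexit : ∀ u : ℝ, τ ≤ u → ψ u p ∉ C) :
    ∀ t t' : ℝ, τ < t → t ≤ t' → φ (-t') (ψ t' p) = φ (-t) (ψ t p) := by
  intro t t' ht htt'
  have h : φ (t' - t) (ψ t p) = ψ (t' - t) (ψ t p) := by
    apply hagree _ _ (by linarith)
    intro u hu _
    rw [← hψadd]
    exact hexit _ (by linarith)
  rw [← hψadd, sub_add_cancel] at h
  rw [← h, ← hφadd]
  congr 1
  ring
end

section
/- Let α be a set, C ⊆ α, and let φ, ψ : ℝ → α → α be two one-parameter groups of maps (φ 0 = id, φ (s+t) = φ s ∘ φ t, and likewise for ψ). Assume that for every q ∈ α and every s ≥ 0, if ψ u q ∉ C for all u ∈ [0, s], then φ s q = ψ s q; and assume that for every p ∈ α there exists τ(p) ≥ 0 such that ψ u p ∉ C for all u ≥ τ(p). Then there exists a map κ : α → α such that (i) for every p ∈ α and every t > τ(p), κ p = φ (−t) (ψ t p), and (ii) κ intertwines the two flows: κ (ψ s p) = φ s (κ p) for all s ∈ ℝ and p ∈ α. -/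
/-- The scattering map `κ = lim_{t→∞} φ(−t) ∘ ψ t` exists (the limit is attained in
finite time, after the exit time `τ p` of each point) and intertwines the two flows. -/
theorem scattering_map_exists {α : Type*} (C : Set α) (φ ψ : ℝ → α → α)
    (hφ0 : ∀ x, φ 0 x = x) (hφadd : ∀ s t x, φ (s + t) x = φ s (φ t x))
    (hψ0 : ∀ x, ψ 0 x = x) (hψadd : ∀ s t x, ψ (s + t) x = ψ s (ψ t x))
    (hagree : ∀ q : α, ∀ s : ℝ, 0 ≤ s →
      (∀ u : ℝ, 0 ≤ u → u ≤ s → ψ u q ∉ C) → φ s q = ψ s q)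
    (τ : α → ℝ) (hτ : ∀ p, 0 ≤ τ p)
    (hexit : ∀ p : α, ∀ u : ℝ, τ p ≤ u → ψ u p ∉ C) :
    ∃ κ : α → α,
      (∀ p : α, ∀ t : ℝ, τ p < t → κ p = φ (-t) (ψ t p)) ∧
      (∀ s : ℝ, ∀ p : α, κ (ψ s p) = φ s (κ p)) := by
  have key : ∀ p t, τ p ≤ t → φ (-(τ p)) (ψ (τ p) p) = φ (-t) (ψ t p) := by
    intro p t ht
    have h1 : φ (t - τ p) (ψ (τ p) p) = ψ (t - τ p) (ψ (τ p) p) := by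
      apply hagree _ _ (by linarith)
      intro u hu _
      rw [← hψadd]
      exact hexit p _ (by linarith)
    have h2 : ψ t p = φ (t - τ p) (ψ (τ p) p) := by
      rw [h1, ← hψadd, sub_add_cancel]
    rw [h2, ← hφadd]
    congr 1
    ring
  refine ⟨fun p => φ (-(τ p)) (ψ (τ p) p), fun p t ht => key p t ht.le, fun s p => ?_⟩
  have e1 := key (ψ s p) (max (τ (ψ s p)) (τ p - s)) (le_max_left _ _)
  have e2 := key p (max (τ (ψ s p)) (τ p - s) + s)
    (by linarith [le_max_right (τ (ψ s p)) (τ p - s)])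
  show φ (-(τ (ψ s p))) (ψ (τ (ψ s p)) (ψ s p)) = φ s (φ (-(τ p)) (ψ (τ p) p))
  rw [e1, e2, ← hψadd, ← hφadd]
  congr 1
  ring
end

section
/- Let A : ℝ → ℝ be continuous, c ∈ (−1, 1], T > 0, and define E(t) = exp(−2∫₀ᵗ A(s) ds) and Ξ(t) = (1 + c − (1 − c)·E(t)) / (1 + c + (1 − c)·E(t)). Then Ξ(T) = Ξ(0) if and only if c = 1 or ∫₀ᵀ A(s) ds = 0. Moreover, if A is T-periodic and ∫₀ᵀ A(s) ds = 0, then Ξ is T-periodic: Ξ(t + T) = Ξ(t) for all t ∈ ℝ. -/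
open Real

/-- Periodicity criterion for the explicit flow of `Ẑ = Ξ₀∂_t − A(t)(1 − Ξ₀²)∂_{Ξ₀}`:
`Ξ(T) = Ξ(0)` iff `c = 1` or `∫₀ᵀ A = 0`, and if `A` is `T`-periodic with
`∫₀ᵀ A = 0` then `Ξ` is `T`-periodic. -/
theorem flow_formula_periodicity (A : ℝ → ℝ) (hA : Continuous A)
    (c : ℝ) (hc : c ∈ Set.Ioc (-1 : ℝ) 1) (T : ℝ) (hT : 0 < T) :
    let E : ℝ → ℝ := fun t => Real.exp (-2 * ∫ s in (0:ℝ)..t, A s)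
    let Ξ : ℝ → ℝ := fun t => (1 + c - (1 - c) * E t) / (1 + c + (1 - c) * E t)
    (Ξ T = Ξ 0 ↔ c = 1 ∨ (∫ s in (0:ℝ)..T, A s) = 0) ∧
    ((∀ t : ℝ, A (t + T) = A t) → (∫ s in (0:ℝ)..T, A s) = 0 →
      ∀ t : ℝ, Ξ (t + T) = Ξ t) := by
  intro E Ξ
  obtain ⟨hc1, hc2⟩ := hc
  refine ⟨⟨?_, ?_⟩, ?_⟩
  · intro h
    by_cases h1 : c = 1
    · exact Or.inl h1
    right
    have hq : 0 < 1 - c := sub_pos.mpr (lt_of_le_of_ne hc2 h1)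
    have hp : 0 < 1 + c := by linarith
    have hE : 0 < E T := Real.exp_pos _
    have hE0 : E 0 = 1 := by simp [E]
    have h2 : (1 + c - (1 - c) * E T) / (1 + c + (1 - c) * E T)
        = (1 + c - (1 - c) * E 0) / (1 + c + (1 - c) * E 0) := h
    have hd : 0 < 1 + c + (1 - c) * E T := by positivity
    rw [hE0, div_eq_div_iff hd.ne' (by linarith)] at h2
    have h3 : ((1 + c) * (1 - c)) * (1 - E T) = 0 := by linarith
    have h4 : E T = 1 := by
      rcases mul_eq_zero.mp h3 with h5 | h5
      · exact absurd h5 (mul_pos hp hq).ne'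
      · linarith
    have h6 := (Real.exp_eq_one_iff _).mp h4
    linarith
  · rintro (h | h)
    · simp [Ξ, h]
    · simp [Ξ, E, h]
  · intro hper h t
    have hP : Function.Periodic A T := hper
    have h1 : (∫ s in (0:ℝ)..(t + T), A s) = ∫ s in (0:ℝ)..t, A s := by
      rw [← intervalIntegral.integral_add_adjacent_intervals
        (hA.intervalIntegrable 0 t) (hA.intervalIntegrable t (t + T)),
        hP.intervalIntegral_add_eq t 0, zero_add, h, add_zero]
    simp only [Ξ, E, h1]
end

section
/- On T*ℝ⁴ = ℝ⁴ × ℝ⁴ with coordinates (x₀, x₁, x₂, x₃; ξ₀, ξ₁, ξ₂, ξ₃), let f₀(x, ξ) = ξ₃·x₁·x₂ + ξ₁·ξ₂/ξ₃, defined where ξ₃ ≠ 0. Fix an initial point (x⁰, ξ⁰) with ξ₃⁰ > 0 and define the curve γ(t) = (x₀⁰, x₁(t), x₂(t), x₃(t); ξ₀⁰, ξ₁(t), ξ₂(t), ξ₃⁰) by x₁(t) = cos t·x₁⁰ + sin t·ξ₂⁰/ξ₃⁰, x₂(t) = cos t·x₂⁰ + sin t·ξ₁⁰/ξ₃⁰,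 ξ₁(t) = cos t·ξ₁⁰ − sin t·ξ₃⁰·x₂⁰, ξ₂(t) = cos t·ξ₂⁰ − sin t·ξ₃⁰·x₁⁰, and x₃(t) = x₃⁰ + (sin 2t/2)·(x₁⁰x₂⁰ − ξ₁⁰ξ₂⁰/(ξ₃⁰)²) + ((1 − cos 2t)/2)·(x₁⁰ξ₁⁰ + x₂⁰ξ₂⁰)/ξ₃⁰. Then γ(0) = (x⁰, ξ⁰) and γ solves Hamilton's equations for f₀: for each i ∈ {0,1,2,3}, dxᵢ/dt = (∂f₀/∂ξᵢ)(γ(t)) and dξᵢ/dt = −(∂f₀/∂xᵢ)(γ(t)). In particular, at t = π/4 the flow fixes x₀, ξ₀, ξ₃ and sends the homogeneous coordinates (x₁, ξ̂₁; x₂, ξ̂₂), with ξ̂ᵢ = ξᵢ/ξ₃, to ((x₁ + ξ̂₂)/√2, (ξ̂₁ − x₂)/√2; (x₂ + ξ̂₁)/√2, (ξ̂₂ − x₁)/√2). -/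
open Real

lemma hf_aux_lin (p q u : ℝ) : deriv (fun u : ℝ => p * u + q) u = p := by
  have h := ((hasDerivAt_id u).const_mul p).add_const q
  simpa using h.deriv

lemma hf_aux_inv (p q u : ℝ) (hu : u ≠ 0) :
    deriv (fun u : ℝ => u * p + q / u) u = p - q / u ^ 2 := by
  have h := ((hasDerivAt_id u).mul_const p).add ((hasDerivAt_inv hu).const_mul q)
  have e : (fun u : ℝ => u * p + q / u) = (fun u : ℝ => id u * p) + fun u : ℝ => q * u⁻¹ := by
    funext v
    simp [div_eq_mul_inv]
  rw [e, h.deriv]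
  field_simp
  ring

lemma hf_aux_trig (a b t : ℝ) :
    HasDerivAt (fun s : ℝ => Real.cos s * a + Real.sin s * b)
      (-Real.sin t * a + Real.cos t * b) t :=
  ((Real.hasDerivAt_cos t).mul_const a).add ((Real.hasDerivAt_sin t).mul_const b)

lemma hf_aux_trig' (a b t : ℝ) :
    HasDerivAt (fun s : ℝ => Real.cos s * a - Real.sin s * b)
      (-Real.sin t * a - Real.cos t * b) t :=
  ((Real.hasDerivAt_cos t).mul_const a).sub ((Real.hasDerivAt_sin t).mul_const b)

lemma hf_aux_two (c a b t : ℝ) :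
    HasDerivAt (fun s : ℝ => c + (Real.sin (2 * s) / 2) * a + ((1 - Real.cos (2 * s)) / 2) * b)
      (Real.cos (2 * t) * a + Real.sin (2 * t) * b) t := by
  have h2 : HasDerivAt (fun s : ℝ => 2 * s) 2 t := by
    simpa using (hasDerivAt_id t).const_mul (2 : ℝ)
  have hs := ((h2.sin.div_const 2).mul_const a).const_add c
  have hc := ((h2.cos.const_sub 1).div_const 2).mul_const b
  refine ((hs.add hc).congr_deriv ?_)
  ring

/-- The explicit Hamiltonian flow of `f₀ = ξ₃(x₁x₂ + ξ̂₁ξ̂₂)` on `T*ℝ⁴`: the given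
curve `γ` starts at `(x⁰, ξ⁰)`, solves Hamilton's equations
`ẋᵢ = ∂f₀/∂ξᵢ`, `ξ̇ᵢ = −∂f₀/∂xᵢ`, and at `t = π/4` fixes `x₀, ξ₀, ξ₃` while
sending `(x₁, ξ̂₁; x₂, ξ̂₂)` to
`((x₁ + ξ̂₂)/√2, (ξ̂₁ − x₂)/√2; (x₂ + ξ̂₁)/√2, (ξ̂₂ − x₁)/√2)`. -/
theorem hamilton_flow_f0 (X Ξ : Fin 4 → ℝ) (hΞ3 : 0 < Ξ 3) :
    let f₀ : (Fin 4 → ℝ) → (Fin 4 → ℝ) → ℝ :=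
      fun x ξ => ξ 3 * x 1 * x 2 + ξ 1 * ξ 2 / ξ 3
    let γx : ℝ → Fin 4 → ℝ := fun t =>
      ![X 0,
        Real.cos t * X 1 + Real.sin t * (Ξ 2 / Ξ 3),
        Real.cos t * X 2 + Real.sin t * (Ξ 1 / Ξ 3),
        X 3 + (Real.sin (2 * t) / 2) * (X 1 * X 2 - Ξ 1 * Ξ 2 / (Ξ 3) ^ 2)
            + ((1 - Real.cos (2 * t)) / 2) * ((X 1 * Ξ 1 + X 2 * Ξ 2) / Ξ 3)]
    let γξ : ℝ → Fin 4 → ℝ := fun t =>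
      ![Ξ 0,
        Real.cos t * Ξ 1 - Real.sin t * (Ξ 3 * X 2),
        Real.cos t * Ξ 2 - Real.sin t * (Ξ 3 * X 1),
        Ξ 3]
    (γx 0 = X ∧ γξ 0 = Ξ) ∧
    (∀ (t : ℝ) (i : Fin 4),
      HasDerivAt (fun s => γx s i)
        (deriv (fun u => f₀ (γx t) (Function.update (γξ t) i u)) (γξ t i)) t ∧
      HasDerivAt (fun s => γξ s i)
        (-(deriv (fun u => f₀ (Function.update (γx t) i u) (γξ t)) (γx t i))) t) ∧
    (γx (π / 4) 0 = X 0 ∧ γξ (π / 4) 0 = Ξ 0 ∧ γξ (π / 4) 3 = Ξ 3 ∧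
     γx (π / 4) 1 = (X 1 + Ξ 2 / Ξ 3) / Real.sqrt 2 ∧
     γξ (π / 4) 1 / Ξ 3 = (Ξ 1 / Ξ 3 - X 2) / Real.sqrt 2 ∧
     γx (π / 4) 2 = (X 2 + Ξ 1 / Ξ 3) / Real.sqrt 2 ∧
     γξ (π / 4) 2 / Ξ 3 = (Ξ 2 / Ξ 3 - X 1) / Real.sqrt 2) := by
  intro f₀ γx γξ
  have h3 : Ξ 3 ≠ 0 := hΞ3.ne'
  refine ⟨⟨?_, ?_⟩, ?_, ?_⟩
  · funext i
    fin_cases i <;> simp [γx]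
  · funext i
    fin_cases i <;> simp [γξ]
  · intro t i
    have fx : ∀ x ξ, f₀ x ξ = ξ 3 * x 1 * x 2 + ξ 1 * ξ 2 / ξ 3 := fun _ _ => rfl
    have e3 : γξ t 3 = Ξ 3 := rfl
    fin_cases i
    · constructor
      · refine (hasDerivAt_const t (X 0)).congr_deriv ?_
        simp [fx]
      · refine (hasDerivAt_const t (Ξ 0)).congr_deriv ?_
        simp [fx]
    · constructor
      · refine (hf_aux_trig (X 1) (Ξ 2 / Ξ 3) t).congr_deriv ?_
        have e : (fun u => f₀ (γx t) (Function.update (γξ t) 1 u)) =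
            fun u => (γξ t 2 / Ξ 3) * u + Ξ 3 * γx t 1 * γx t 2 := by
          funext u
          simp [fx, e3]
          ring
        refine Eq.trans ?_ ((congrArg (fun g => deriv g (γξ t 1)) e).trans
          (hf_aux_lin _ _ _)).symm
        simp [γξ]
        field_simp
        ring
      · refine (hf_aux_trig' (Ξ 1) (Ξ 3 * X 2) t).congr_deriv ?_
        have e : (fun u => f₀ (Function.update (γx t) 1 u) (γξ t)) =
            fun u => (Ξ 3 * γx t 2) * u + γξ t 1 * γξ t 2 / Ξ 3 := by
          funext u
          simp [fx, e3]
          ring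
        refine Eq.trans ?_ (congrArg Neg.neg ((congrArg (fun g => deriv g (γx t 1)) e).trans
          (hf_aux_lin _ _ _))).symm
        simp [γx]
        field_simp
        ring
    · constructor
      · refine (hf_aux_trig (X 2) (Ξ 1 / Ξ 3) t).congr_deriv ?_
        have e : (fun u => f₀ (γx t) (Function.update (γξ t) 2 u)) =
            fun u => (γξ t 1 / Ξ 3) * u + Ξ 3 * γx t 1 * γx t 2 := by
          funext u
          simp [fx, e3]
          ring
        refine Eq.trans ?_ ((congrArg (fun g => deriv g (γξ t 2)) e).trans
          (hf_aux_lin _ _ _)).symm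
        simp [γξ]
        field_simp
        ring
      · refine (hf_aux_trig' (Ξ 2) (Ξ 3 * X 1) t).congr_deriv ?_
        have e : (fun u => f₀ (Function.update (γx t) 2 u) (γξ t)) =
            fun u => (Ξ 3 * γx t 1) * u + γξ t 1 * γξ t 2 / Ξ 3 := by
          funext u
          simp [fx, e3]
        refine Eq.trans ?_ (congrArg Neg.neg ((congrArg (fun g => deriv g (γx t 2)) e).trans
          (hf_aux_lin _ _ _))).symm
        simp [γx]
        field_simp
        ring
    · constructor
      · refine (hf_aux_two (X 3) (X 1 * X 2 - Ξ 1 * Ξ 2 / (Ξ 3) ^ 2)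
          ((X 1 * Ξ 1 + X 2 * Ξ 2) / Ξ 3) t).congr_deriv ?_
        have e : (fun u => f₀ (γx t) (Function.update (γξ t) 3 u)) =
            fun u => u * (γx t 1 * γx t 2) + γξ t 1 * γξ t 2 / u := by
          funext u
          simp [fx]
          ring
        refine Eq.trans ?_ ((congrArg (fun g => deriv g (γξ t 3)) e).trans
          (hf_aux_inv _ _ _ h3)).symm
        rw [Real.cos_two_mul', Real.sin_two_mul]
        simp [γξ, γx]
        field_simp
        ring
      · refine (hasDerivAt_const t (Ξ 3)).congr_deriv ?_
        simp [fx]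
  · have hs : Real.sqrt 2 * Real.sqrt 2 = 2 := Real.mul_self_sqrt (by norm_num)
    have hs0 : Real.sqrt 2 ≠ 0 := by positivity
    have hd : Real.sqrt 2 / 2 = 1 / Real.sqrt 2 := by
      field_simp
      nlinarith
    refine ⟨rfl, rfl, rfl, ?_, ?_, ?_, ?_⟩ <;>
      simp [γx, γξ, hd, -one_div] <;> field_simp
end

section
/- Let ρ̂ : ℝ × ℝ³ → ℝ be smooth and everywhere positive, with variables (x₀, y). Define w(x₀, Ξ, y) = ρ̂(x₀, y)^{−2}·(1 − Ξ²) and the vector field components V₁(x₀, Ξ, y) = Ξ and V₂(x₀, Ξ, y) = −½·(∂ρ̂/∂x₀)(x₀, y)/ρ̂(x₀, y)·(1 − Ξ²). Then the weighted divergence of V with respect to the density w vanishes identically: for all (x₀, Ξ, y) ∈ ℝ × ℝ × ℝ³, ∂/∂x₀ [ w(x₀, Ξ, y)·V₁(x₀, Ξ, y) ] + ∂/∂Ξ [ w(x₀, Ξ, y)·V₂(x₀, Ξ, y) ] = 0. -/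
/-- Coordinate form of the invariance `L_{[Ẑ]} μ_Popp^{SNS*Σ} = 0`: for the density
`w = ρ̂^{−2}(1 − Ξ²)` and the vector field with components `V₁ = Ξ`,
`V₂ = −½ ρ̂^{−1}ρ̂_{x₀}(1 − Ξ²)`, the weighted divergence
`∂_{x₀}(wV₁) + ∂_Ξ(wV₂)` vanishes identically. -/
theorem weighted_divergence_Z_hat_vanishes
    (ρ : ℝ × (Fin 3 → ℝ) → ℝ) (hρ : ContDiff ℝ (⊤ : ℕ∞) ρ) (hpos : ∀ p, 0 < ρ p) :
    ∀ (x₀ Ξ : ℝ) (y : Fin 3 → ℝ),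
      deriv (fun s : ℝ => (1 - Ξ ^ 2) / (ρ (s, y)) ^ 2 * Ξ) x₀ +
        deriv (fun Ξ' : ℝ => (1 - Ξ' ^ 2) / (ρ (x₀, y)) ^ 2 *
          (-(1 / 2) * (deriv (fun s : ℝ => ρ (s, y)) x₀ / ρ (x₀, y)) * (1 - Ξ' ^ 2))) Ξ
      = 0 := by
  intro x₀ Ξ y
  have hd : DifferentiableAt ℝ (fun s : ℝ => ρ (s, y)) x₀ := by
    have h1 : Differentiable ℝ ρ := hρ.differentiable (by simp)
    exact (h1 (x₀, y)).comp x₀ (by fun_prop : DifferentiableAt ℝ (fun s : ℝ => (s, y)) x₀)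
  have h := hd.hasDerivAt
  have hne : ρ (x₀, y) ≠ 0 := (hpos _).ne'
  generalize deriv (fun s : ℝ => ρ (s, y)) x₀ = d at h ⊢
  have hA := (((hasDerivAt_const x₀ (1 - Ξ ^ 2)).fun_div (h.fun_pow 2)
    (pow_ne_zero 2 hne)).mul_const Ξ).deriv
  have hq : HasDerivAt (fun t : ℝ => 1 - t ^ 2) (-(2 * Ξ)) Ξ := by
    simpa using (hasDerivAt_pow 2 Ξ).const_sub 1
  have hB := ((hq.div_const (ρ (x₀, y) ^ 2)).fun_mul
    (hq.const_mul (-(1 / 2) * (d / ρ (x₀, y))))).deriv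
  rw [hA, hB]
  field_simp
  push_cast
  ring
end

section
/- Let g : ℝ → ℝ be smooth, set Q(x) = (x₁² + x₂²)/2 on ℝ², φ = g ∘ Q, and define Φ : ℝ → ℝ² → ℝ² by Φ_t(x) = ( cos(t·g'(Q(x)))·x₁ − sin(t·g'(Q(x)))·x₂, sin(t·g'(Q(x)))·x₁ + cos(t·g'(Q(x)))·x₂ ). Then: (i) for every x ∈ ℝ², Φ₀(x) = x and d/dt Φ_t(x) = H_φ(Φ_t(x)), where H_φ(x) = (−∂₂φ(x), ∂₁φ(x)) is the planar Hamiltonian vector field of φ; and (ii) writing λ(x)(w) = ½(x₁w₂ − x₂w₁) for the Liouville 1-form and ψ(x) = −φ(x) + Q(x)·g'(Q(x)), the time-one flow satisfies, for all x, w ∈ ℝ²: λ(Φ₁(x))(DΦ₁(x)·w) − λ(x)(w) = Dψ(x)(w), where DΦ₁(x) and Dψ(x) denote Fréchet derivatives. -/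
/-- The Hamiltonian flow of a radial function `φ = g ∘ Q`, `Q = (x₁² + x₂²)/2`, rotates
each circle `{Q = const}` with angular speed `g'(Q)`; its time-one map changes the
Liouville form `λ = ½(x₁dx₂ − x₂dx₁)` by the exact differential of
`ψ = −φ + Q·g'(Q)`. -/
theorem radial_hamiltonian_flow_liouville (g : ℝ → ℝ) (hg : ContDiff ℝ (⊤ : ℕ∞) g) :
    let Q : ℝ × ℝ → ℝ := fun x => (x.1 ^ 2 + x.2 ^ 2) / 2
    let φ : ℝ × ℝ → ℝ := fun x => g (Q x)
    let Φ : ℝ → ℝ × ℝ → ℝ × ℝ := fun t x =>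
      (Real.cos (t * deriv g (Q x)) * x.1 - Real.sin (t * deriv g (Q x)) * x.2,
       Real.sin (t * deriv g (Q x)) * x.1 + Real.cos (t * deriv g (Q x)) * x.2)
    let lam : ℝ × ℝ → ℝ × ℝ → ℝ := fun x w => (x.1 * w.2 - x.2 * w.1) / 2
    (∀ x : ℝ × ℝ, Φ 0 x = x) ∧
    (∀ (x : ℝ × ℝ) (t : ℝ),
      HasDerivAt (fun s => Φ s x)
        (-(fderiv ℝ φ (Φ t x) (0, 1)), fderiv ℝ φ (Φ t x) (1, 0)) t) ∧
    (∀ x w : ℝ × ℝ,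
      lam (Φ 1 x) (fderiv ℝ (Φ 1) x w) - lam x w
        = fderiv ℝ (fun y => -φ y + Q y * deriv g (Q y)) x w) := by
  intro Q φ Φ lam
  have hg1 : ∀ y, HasDerivAt g (deriv g y) y := fun y =>
    ((hg.differentiable (by simp)) y).hasDerivAt
  have hg' : Differentiable ℝ (deriv g) :=
    (contDiff_infty_iff_deriv.1 hg).2.differentiable (by simp)
  have hg2 : ∀ y, HasDerivAt (deriv g) (deriv (deriv g) y) y := fun y => (hg' y).hasDerivAt
  have h1 : ∀ x : ℝ × ℝ, HasFDerivAt (fun y : ℝ × ℝ => y.1) (ContinuousLinearMap.fst ℝ ℝ ℝ) x :=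
    fun x => hasFDerivAt_fst
  have h2 : ∀ x : ℝ × ℝ, HasFDerivAt (fun y : ℝ × ℝ => y.2) (ContinuousLinearMap.snd ℝ ℝ ℝ) x :=
    fun x => hasFDerivAt_snd
  have hQ : ∀ x : ℝ × ℝ, HasFDerivAt Q
      (x.1 • ContinuousLinearMap.fst ℝ ℝ ℝ + x.2 • ContinuousLinearMap.snd ℝ ℝ ℝ) x := by
    intro x
    have h := (((h1 x).mul (h1 x)).add ((h2 x).mul (h2 x))).mul_const (1 / 2 : ℝ)
    have e : Q = fun y : ℝ × ℝ => (y.1 * y.1 + y.2 * y.2) * (1 / 2 : ℝ) := by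
      funext y; simp only [Q]; ring
    rw [e]
    refine h.congr_fderiv ?_
    ext <;> simp <;> ring
  have hφ : ∀ x, HasFDerivAt φ (deriv g (Q x) •
      (x.1 • ContinuousLinearMap.fst ℝ ℝ ℝ + x.2 • ContinuousLinearMap.snd ℝ ℝ ℝ)) x :=
    fun x => (hg1 (Q x)).comp_hasFDerivAt x (hQ x)
  have hθ : ∀ x, HasFDerivAt (fun y => deriv g (Q y)) (deriv (deriv g) (Q x) •
      (x.1 • ContinuousLinearMap.fst ℝ ℝ ℝ + x.2 • ContinuousLinearMap.snd ℝ ℝ ℝ)) x :=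
    fun x => (hg2 (Q x)).comp_hasFDerivAt x (hQ x)
  have hQΦ : ∀ t x, Q (Φ t x) = Q x := by
    intro t x
    simp only [Q, Φ]
    linear_combination ((x.1 ^ 2 + x.2 ^ 2) / 2) *
      Real.sin_sq_add_cos_sq (t * deriv g ((x.1 ^ 2 + x.2 ^ 2) / 2))
  refine ⟨?_, ?_, ?_⟩
  · intro x
    simp [Φ]
  · intro x t
    rw [(hφ (Φ t x)).fderiv, hQΦ]
    have hl : HasDerivAt (fun s : ℝ => s * deriv g (Q x)) (deriv g (Q x)) t := by
      simpa using (hasDerivAt_id t).mul_const (deriv g (Q x))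
    have hc := hl.cos
    have hs := hl.sin
    have h := ((hc.mul_const x.1).sub (hs.mul_const x.2)).prodMk
      ((hs.mul_const x.1).add (hc.mul_const x.2))
    refine h.congr_deriv ?_
    ext <;> simp [Φ] <;> ring
  · intro x w
    have hc := (hθ x).cos
    have hs := (hθ x).sin
    have hΦ := ((hc.mul (h1 x)).sub (hs.mul (h2 x))).prodMk
      ((hs.mul (h1 x)).add (hc.mul (h2 x)))
    have e : Φ 1 = fun y : ℝ × ℝ =>
      (Real.cos (deriv g (Q y)) * y.1 - Real.sin (deriv g (Q y)) * y.2,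
       Real.sin (deriv g (Q y)) * y.1 + Real.cos (deriv g (Q y)) * y.2) := by
      funext y; simp only [Φ, one_mul]
    have hΦ' : fderiv ℝ (Φ 1) x = _ :=
      (congrArg (fun F => fderiv ℝ F x) e).trans hΦ.fderiv
    have hψ : fderiv ℝ (fun y => -φ y + Q y * deriv g (Q y)) x = _ :=
      ((hφ x).neg.add ((hQ x).mul (hθ x))).fderiv
    rw [hΦ', hψ, e]
    have hsc := Real.sin_sq_add_cos_sq (deriv g (Q x))
    have hQx : Q x = (x.1 ^ 2 + x.2 ^ 2) / 2 := rfl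
    simp [lam]
    generalize deriv (deriv g) (Q x) = b
    generalize Real.sin (deriv g (Q x)) = s at *
    generalize Real.cos (deriv g (Q x)) = c at *
    rw [hQx]
    linear_combination ((x.1 * w.2 - x.2 * w.1) / 2 +
      (x.1 ^ 2 + x.2 ^ 2) / 2 * b * (x.1 * w.1 + x.2 * w.2)) * hsc
end
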